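/- Let L ≥ 3 be an integer, λ > 0, q := 2/L, and let φ_m(ρ) := (m − ρ)² + λ|ρ|^q for ρ ∈ ℝ, with threshold τ := (1 − q/2)·λ^{1/(2−q)}·(1 − q)^{(q−1)/(2−q)}. If |m| < τ, then 0 is the unique global minimizer of φ_m over ℝ. If |m| > τ, then φ_m has a unique global minimizer ρ*(m) over ℝ, this minimizer is nonzero, and it has the same sign as m. -/

import Mathlib

/-- `φ_m(ρ) = (m − ρ)² + λ|ρ|^q`. -/
noncomputable def phi (m lam q ρ : ℝ) : ℝ := (m - ρ) ^ 2 + lam * |ρ| ^ q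

/-!
For `x > 0`, the inequality `φ_m(x) ≤ m² - c` can be solved for `m`: it says that
`m ≥ (x + λ x^(q-1) + c / x) / 2`. For `c = 0` the right-hand side has minimum `τ`, so `φ_m` goes
below `φ_m(0) = m²` on the positive half-line exactly when `m > τ`. In that case, let `m² - c` be
the minimum of `φ_m`, so that `c > 0`. The positive minimizers of `φ_m` are then minimizers of the
right-hand side, which is strictly convex, so there is only one. Negative `x` reduce to positive
ones through `φ_{-m}(-x) = φ_m(x)`.
-/

open Set

theorem strictConvexOn_const_mul {E : Type*} [AddCommMonoid E] [SMul ℝ E] {s : Set E} {f : E → ℝ}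
    {c : ℝ} (hf : StrictConvexOn ℝ s f) (hc : 0 < c) : StrictConvexOn ℝ s fun x ↦ c * f x :=
  ⟨hf.1, fun x hx y hy hxy a b ha hb hab ↦
    calc c * f (a • x + b • y) < c * (a • f x + b • f y) :=
          mul_lt_mul_of_pos_left (hf.2 hx hy hxy ha hb hab) hc
      _ = a • (c * f x) + b • (c * f y) := by simp only [smul_eq_mul]; ring⟩

section Rpow

variable {p : ℝ}

theorem one_add_mul_sub_one_le_rpow_of_nonpos (hp : p ≤ 0) {s : ℝ} (hs : 0 < s) :
    1 + p * (s - 1) ≤ s ^ p := by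
  calc 1 + p * (s - 1) ≤ Real.log s * p + 1 := by
        linarith [mul_le_mul_of_nonpos_left (Real.log_le_sub_one_of_pos hs) hp]
    _ ≤ Real.exp (Real.log s * p) := Real.add_one_le_exp _
    _ = s ^ p := (Real.rpow_def_of_pos hs p).symm

theorem convexOn_rpow_of_nonpos (hp : p ≤ 0) : ConvexOn ℝ (Ioi 0) fun x : ℝ ↦ x ^ p := by
  have hlog : ConvexOn ℝ (Ioi 0) fun x : ℝ ↦ -p * -Real.log x :=
    strictConcaveOn_log_Ioi.concaveOn.neg.smul (neg_nonneg.2 hp)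
  have hexp : ConvexOn ℝ (Ioi 0) fun x : ℝ ↦ Real.exp (-p * -Real.log x) :=
    ⟨convex_Ioi 0, fun x hx y hy a b ha hb hab ↦
      (Real.exp_le_exp.2 (hlog.2 hx hy ha hb hab)).trans
        (convexOn_exp.2 (mem_univ _) (mem_univ _) ha hb hab)⟩
  refine hexp.congr fun x hx ↦ ?_
  simp only [Real.rpow_def_of_pos hx, neg_mul_neg, mul_comm p]

end Rpow

/-- The threshold `τ` on `|m|` at which the minimizer of `φ_m` leaves `0`. -/
noncomputable def threshold (lam q : ℝ) : ℝ :=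
  (1 - q / 2) * lam ^ (1 / (2 - q)) * (1 - q) ^ ((q - 1) / (2 - q))

/-- The point of the positive half-line at which `φ_τ` takes the value `φ_τ(0)`; the minimizer of
`φ_m` jumps between it and `0` as `m` crosses `τ`. -/
noncomputable def jumpPoint (lam q : ℝ) : ℝ := (lam * (1 - q)) ^ (1 / (2 - q))

/-- The parameter `m` at which `φ_m` takes the value `m² - c` at the given point `x > 0`. -/
noncomputable def levelParam (lam q c x : ℝ) : ℝ := (x + lam * x ^ (q - 1) + c * x⁻¹) / 2

section Threshold

variable {lam q x : ℝ}

theorem jumpPoint_pos (hlam : 0 < lam) (hq : q < 1) : 0 < jumpPoint lam q :=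
  Real.rpow_pos_of_pos (mul_pos hlam (sub_pos.2 hq)) _

theorem mul_jumpPoint_rpow (hlam : 0 < lam) (hq : q < 1) :
    lam * (1 - q) * jumpPoint lam q ^ (q - 1) = jumpPoint lam q := by
  have hbase : 0 < lam * (1 - q) := mul_pos hlam (sub_pos.2 hq)
  have hexponent : 1 + 1 / (2 - q) * (q - 1) = 1 / (2 - q) := by
    have : 2 - q ≠ 0 := by linarith
    field_simp
    ring
  calc lam * (1 - q) * jumpPoint lam q ^ (q - 1)
      = (lam * (1 - q)) ^ (1 + 1 / (2 - q) * (q - 1)) := by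
        rw [Real.rpow_add hbase, Real.rpow_one, Real.rpow_mul hbase.le, jumpPoint]
    _ = jumpPoint lam q := by rw [hexponent, jumpPoint]

theorem threshold_eq_jumpPoint (hlam : 0 ≤ lam) (hq : q < 1) :
    threshold lam q = (2 - q) / (2 * (1 - q)) * jumpPoint lam q := by
  have hq' : 0 < 1 - q := sub_pos.2 hq
  have hexponent : (q - 1) / (2 - q) = 1 / (2 - q) - 1 := by
    have : 2 - q ≠ 0 := by linarith
    field_simp
    ring
  rw [threshold, jumpPoint, Real.mul_rpow hlam hq'.le, hexponent, Real.rpow_sub_one hq'.ne']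
  field_simp

theorem threshold_pos (hlam : 0 < lam) (hq : q < 1) : 0 < threshold lam q := by
  rw [threshold_eq_jumpPoint hlam.le hq]
  exact mul_pos (div_pos (by linarith) (by linarith)) (jumpPoint_pos hlam hq)

theorem levelParam_zero_jumpPoint_mul (hlam : 0 < lam) (hq : q < 1) {s : ℝ} (hs : 0 < s) :
    levelParam lam q 0 (jumpPoint lam q * s) =
      jumpPoint lam q * (s + s ^ (q - 1) / (1 - q)) / 2 := by
  have hq' : 1 - q ≠ 0 := (sub_pos.2 hq).ne'
  rw [levelParam, Real.mul_rpow (jumpPoint_pos hlam hq).le hs.le]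
  field_simp
  linear_combination s * s ^ (q - 1) * mul_jumpPoint_rpow hlam hq

theorem levelParam_zero_jumpPoint (hlam : 0 < lam) (hq : q < 1) :
    levelParam lam q 0 (jumpPoint lam q) = threshold lam q := by
  have hq' : 1 - q ≠ 0 := (sub_pos.2 hq).ne'
  have h := levelParam_zero_jumpPoint_mul hlam hq one_pos
  rw [mul_one, Real.one_rpow] at h
  rw [h, threshold_eq_jumpPoint hlam.le hq]
  field_simp
  ring

theorem threshold_le_levelParam_zero (hlam : 0 < lam) (hq : q < 1) (hx : 0 < x) :
    threshold lam q ≤ levelParam lam q 0 x := by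
  have hq' : 0 < 1 - q := sub_pos.2 hq
  have hr := jumpPoint_pos hlam hq
  obtain ⟨s, hs, rfl⟩ : ∃ s, 0 < s ∧ jumpPoint lam q * s = x :=
    ⟨x / jumpPoint lam q, div_pos hx hr, mul_div_cancel₀ x hr.ne'⟩
  have hbernoulli := one_add_mul_sub_one_le_rpow_of_nonpos (sub_nonpos.2 hq.le) hs
  calc threshold lam q
      = jumpPoint lam q * (s + (1 + (q - 1) * (s - 1)) / (1 - q)) / 2 := by
        rw [threshold_eq_jumpPoint hlam.le hq]
        field_simp
        ring
    _ ≤ jumpPoint lam q * (s + s ^ (q - 1) / (1 - q)) / 2 := by gcongr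
    _ = levelParam lam q 0 (jumpPoint lam q * s) :=
        (levelParam_zero_jumpPoint_mul hlam hq hs).symm

end Threshold

section Phi

variable {m lam q c x : ℝ}

theorem strictConvexOn_levelParam (hlam : 0 ≤ lam) (hq : q ≤ 1) (hc : 0 < c) :
    StrictConvexOn ℝ (Ioi 0) (levelParam lam q c) := by
  have hid : ConvexOn ℝ (Ioi 0) fun x : ℝ ↦ x / 2 :=
    ((convexOn_id (convex_Ioi (0 : ℝ))).smul (by norm_num : (0 : ℝ) ≤ 1 / 2)).congr
      fun x _ ↦ by simp only [id, smul_eq_mul]; ring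
  have hrpow : ConvexOn ℝ (Ioi 0) fun x : ℝ ↦ lam / 2 * x ^ (q - 1) :=
    (convexOn_rpow_of_nonpos (sub_nonpos.2 hq)).smul (by positivity)
  have hinv : StrictConvexOn ℝ (Ioi 0) fun x : ℝ ↦ c / 2 * x ^ (-1 : ℤ) :=
    strictConvexOn_const_mul (strictConvexOn_zpow (by norm_num) (by norm_num)) (by positivity)
  refine ((hid.add hrpow).add_strictConvexOn hinv).congr fun x _ ↦ ?_
  simp only [Pi.add_apply, levelParam, zpow_neg_one]
  ring

theorem phi_zero (hq : q ≠ 0) : phi m lam q 0 = m ^ 2 := by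
  simp [phi, Real.zero_rpow hq]

theorem phi_neg_neg (m lam q ρ : ℝ) : phi (-m) lam q (-ρ) = phi m lam q ρ := by
  simp only [phi, abs_neg]
  ring

theorem sq_sub_le_phi (hlam : 0 ≤ lam) (ρ : ℝ) : (m - ρ) ^ 2 ≤ phi m lam q ρ :=
  le_add_of_nonneg_right (by positivity)

theorem continuous_phi (hq : 0 ≤ q) : Continuous (phi m lam q) := by
  unfold phi
  exact ((continuous_const.sub continuous_id).pow 2).add
    (continuous_const.mul (continuous_abs.rpow_const fun _ ↦ Or.inr hq))

theorem phi_eq_levelParam (c : ℝ) (hx : 0 < x) :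
    phi m lam q x = m ^ 2 - c - 2 * x * (m - levelParam lam q c x) := by
  rw [phi, levelParam, abs_of_pos hx, Real.rpow_sub_one hx.ne']
  field_simp
  ring

theorem phi_le_sq_sub_iff (hx : 0 < x) : phi m lam q x ≤ m ^ 2 - c ↔ levelParam lam q c x ≤ m := by
  rw [phi_eq_levelParam c hx, sub_le_self_iff, mul_nonneg_iff_of_pos_left (by positivity),
    sub_nonneg]

theorem phi_lt_sq_sub_iff (hx : 0 < x) : phi m lam q x < m ^ 2 - c ↔ levelParam lam q c x < m := by
  rw [phi_eq_levelParam c hx, sub_lt_self_iff, mul_pos_iff_of_pos_left (by positivity),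
    sub_pos]

theorem exists_forall_phi_le (m : ℝ) (hlam : 0 ≤ lam) (hq : 0 < q) :
    ∃ ρ, ∀ x, phi m lam q ρ ≤ phi m lam q x := by
  refine (continuous_phi hq.le).exists_forall_le' 0 ?_
  filter_upwards [(isCompact_closedBall m |m|).compl_mem_cocompact] with x hx
  have hfar : |m| < |m - x| := by
    simpa [Real.dist_eq, abs_sub_comm] using hx
  calc phi m lam q 0 = m ^ 2 := phi_zero hq.ne'
    _ ≤ (m - x) ^ 2 := (sq_lt_sq.2 hfar).le
    _ ≤ phi m lam q x := sq_sub_le_phi hlam x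

theorem phi_zero_lt_phi_of_pos (hlam : 0 < lam) (hq₀ : q ≠ 0) (hq₁ : q < 1)
    (hm : m < threshold lam q) (hx : 0 < x) : phi m lam q 0 < phi m lam q x := by
  have hlevel : m < levelParam lam q 0 x := hm.trans_le (threshold_le_levelParam_zero hlam hq₁ hx)
  rw [phi_zero hq₀, ← sub_zero (m ^ 2)]
  exact not_le.1 (mt (phi_le_sq_sub_iff hx).1 hlevel.not_ge)

theorem phi_zero_lt_phi (hlam : 0 < lam) (hq₀ : q ≠ 0) (hq₁ : q < 1)
    (hm : |m| < threshold lam q) (hx : x ≠ 0) : phi m lam q 0 < phi m lam q x := by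
  obtain ⟨hm_neg, hm_pos⟩ := abs_lt.1 hm
  rcases hx.lt_or_gt with hx | hx
  · rw [← phi_neg_neg m, ← phi_neg_neg m, neg_zero]
    exact phi_zero_lt_phi_of_pos hlam hq₀ hq₁ (neg_lt.1 hm_neg) (neg_pos.2 hx)
  · exact phi_zero_lt_phi_of_pos hlam hq₀ hq₁ hm_pos hx

theorem phi_jumpPoint_lt_sq (hlam : 0 < lam) (hq : q < 1) (hm : threshold lam q < m) :
    phi m lam q (jumpPoint lam q) < m ^ 2 := by
  rw [← sub_zero (m ^ 2), phi_lt_sq_sub_iff (jumpPoint_pos hlam hq)]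
  rwa [levelParam_zero_jumpPoint hlam hq]

theorem pos_of_phi_lt_sq (hlam : 0 ≤ lam) (hm : 0 ≤ m) (hx : phi m lam q x < m ^ 2) : 0 < x := by
  by_contra! hx_nonpos
  have hsq : m ^ 2 ≤ (m - x) ^ 2 := by gcongr; linarith
  exact (hsq.trans (sq_sub_le_phi hlam x)).not_gt hx

theorem isMinOn_levelParam_of_forall_phi_le (hx : 0 < x)
    (hmin : ∀ y, phi m lam q x ≤ phi m lam q y) :
    IsMinOn (levelParam lam q (m ^ 2 - phi m lam q x)) (Ioi 0) x := by
  have hvalue : phi m lam q x = m ^ 2 - (m ^ 2 - phi m lam q x) := by ring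
  refine isMinOn_iff.2 fun y hy ↦ ?_
  have hle := (phi_le_sq_sub_iff hx).1 hvalue.le
  exact hle.trans (not_lt.1 (mt (phi_lt_sq_sub_iff hy).2 (hvalue ▸ (hmin y).not_gt)))

theorem eq_of_pos_of_forall_phi_le {a b : ℝ} (hlam : 0 ≤ lam) (hq : q ≤ 1) (ha : 0 < a) (hb : 0 < b)
    (hlt : phi m lam q a < m ^ 2) (hmin_a : ∀ x, phi m lam q a ≤ phi m lam q x)
    (hmin_b : ∀ x, phi m lam q b ≤ phi m lam q x) : a = b := by
  have hvalue : phi m lam q b = phi m lam q a := le_antisymm (hmin_b a) (hmin_a b)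
  refine (strictConvexOn_levelParam hlam hq (sub_pos.2 hlt)).eq_of_isMinOn
    (isMinOn_levelParam_of_forall_phi_le ha hmin_a) ?_ ha hb
  rw [← hvalue]
  exact isMinOn_levelParam_of_forall_phi_le hb hmin_b

theorem exists_pos_forall_phi_le_iff_eq (hlam : 0 < lam) (hq₀ : 0 < q) (hq₁ : q < 1)
    (hm : threshold lam q < m) :
    ∃ ρ, 0 < ρ ∧ ∀ s, (∀ x, phi m lam q s ≤ phi m lam q x) ↔ s = ρ := by
  have hlt (s : ℝ) (hs : ∀ x, phi m lam q s ≤ phi m lam q x) : phi m lam q s < m ^ 2 :=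
    (hs _).trans_lt (phi_jumpPoint_lt_sq hlam hq₁ hm)
  have hpos (s : ℝ) (hs : ∀ x, phi m lam q s ≤ phi m lam q x) : 0 < s :=
    pos_of_phi_lt_sq hlam.le ((threshold_pos hlam hq₁).trans hm).le (hlt s hs)
  obtain ⟨ρ, hρ⟩ := exists_forall_phi_le m hlam.le hq₀
  refine ⟨ρ, hpos ρ hρ, fun s ↦ ⟨fun hs ↦ ?_, fun hs ↦ hs ▸ hρ⟩⟩
  exact eq_of_pos_of_forall_phi_le hlam.le hq₁.le (hpos s hs) (hpos ρ hρ) (hlt s hs) hs hρ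

theorem forall_phi_neg_neg_le_iff {ρ : ℝ} :
    (∀ x, phi (-m) lam q (-ρ) ≤ phi (-m) lam q x) ↔ ∀ x, phi m lam q ρ ≤ phi m lam q x := by
  rw [neg_surjective.forall]
  simp only [phi_neg_neg]

theorem exists_sign_eq_forall_phi_le_iff_eq (hlam : 0 < lam) (hq₀ : 0 < q) (hq₁ : q < 1)
    (hm : threshold lam q < |m|) :
    ∃ ρ, ρ ≠ 0 ∧ Real.sign ρ = Real.sign m ∧
      ∀ s, (∀ x, phi m lam q s ≤ phi m lam q x) ↔ s = ρ := by
  have hτ := threshold_pos hlam hq₁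
  rcases lt_abs.1 hm with hm | hm
  · obtain ⟨ρ, hρ, hiff⟩ := exists_pos_forall_phi_le_iff_eq hlam hq₀ hq₁ hm
    exact ⟨ρ, hρ.ne', by rw [Real.sign_of_pos hρ, Real.sign_of_pos (hτ.trans hm)], hiff⟩
  · obtain ⟨ρ, hρ, hiff⟩ := exists_pos_forall_phi_le_iff_eq hlam hq₀ hq₁ hm
    have hm_neg : m < 0 := neg_pos.1 (hτ.trans hm)
    refine ⟨-ρ, (neg_neg_of_pos hρ).ne, ?_, fun s ↦ ?_⟩
    · rw [Real.sign_of_neg (neg_neg_of_pos hρ), Real.sign_of_neg hm_neg]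
    · rw [← forall_phi_neg_neg_le_iff, hiff, neg_eq_iff_eq_neg]

end Phi

theorem stmt1_general {lam q : ℝ} (hlam : 0 < lam) (hq₀ : 0 < q) (hq₁ : q < 1) (m : ℝ) :
    (|m| < threshold lam q →
      (∀ x : ℝ, phi m lam q 0 ≤ phi m lam q x) ∧
      (∀ ρ : ℝ, (∀ x : ℝ, phi m lam q ρ ≤ phi m lam q x) → ρ = 0)) ∧
    (threshold lam q < |m| →
      ∃ ρstar : ℝ, (∀ x : ℝ, phi m lam q ρstar ≤ phi m lam q x) ∧
        ρstar ≠ 0 ∧ Real.sign ρstar = Real.sign m ∧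
        (∀ ρ : ℝ, (∀ x : ℝ, phi m lam q ρ ≤ phi m lam q x) → ρ = ρstar)) := by
  refine ⟨fun hm ↦ ⟨fun x ↦ ?_, fun ρ hρ ↦ ?_⟩, fun hm ↦ ?_⟩
  · rcases eq_or_ne x 0 with rfl | hx
    · exact le_rfl
    · exact (phi_zero_lt_phi hlam hq₀.ne' hq₁ hm hx).le
  · by_contra hne
    exact (hρ 0).not_gt (phi_zero_lt_phi hlam hq₀.ne' hq₁ hm hne)
  · obtain ⟨ρ, hne, hsign, hiff⟩ := exists_sign_eq_forall_phi_le_iff_eq hlam hq₀ hq₁ hm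
    exact ⟨ρ, (hiff ρ).2 rfl, hne, hsign, fun s ↦ (hiff s).1⟩

/-- For `L ≥ 3`, `λ > 0`, `q = 2/L` and threshold
`τ = (1 − q/2)·λ^{1/(2−q)}·(1 − q)^{(q−1)/(2−q)}`:
if `|m| < τ` then `0` is the unique global minimizer of `φ_m`;
if `|m| > τ` then `φ_m` has a unique global minimizer, which is nonzero and
has the same sign as `m`. -/
theorem stmt1 (L : ℕ) (hL : 3 ≤ L) (lam : ℝ) (hlam : 0 < lam) (m q τ : ℝ)
    (hq : q = 2 / L)
    (hτ : τ = (1 - q / 2) * lam ^ (1 / (2 - q)) * (1 - q) ^ ((q - 1) / (2 - q))) :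
    (|m| < τ →
      (∀ x : ℝ, phi m lam q 0 ≤ phi m lam q x) ∧
      (∀ ρ : ℝ, (∀ x : ℝ, phi m lam q ρ ≤ phi m lam q x) → ρ = 0)) ∧
    (τ < |m| →
      ∃ ρstar : ℝ, (∀ x : ℝ, phi m lam q ρstar ≤ phi m lam q x) ∧
        ρstar ≠ 0 ∧ Real.sign ρstar = Real.sign m ∧
        (∀ ρ : ℝ, (∀ x : ℝ, phi m lam q ρ ≤ phi m lam q x) → ρ = ρstar)) := by
  have hL' : (3 : ℝ) ≤ L := by exact_mod_cast hL
  have hq₁ : q < 1 := by rw [hq, div_lt_one (by linarith)]; linarith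
  exact hτ ▸ stmt1_general hlam (hq ▸ by positivity) hq₁ m
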